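/- Let Cₙ be the cycle of odd order n ≥ 5, and let f₀ : V(G₁) → V(G₂) be a constant function between two disjoint copies G₁, G₂ of Cₙ. Then dim(C(Cₙ, f₀)) = ⌈(2n + 3)/5⌉. -/

import Mathlib

/-- The functigraph `C(G, f)`: two disjoint copies of `G` (as `Sum.inl`/`Sum.inr`),
with an edge from each `Sum.inl u` to `Sum.inr (f u)`. -/
def functigraph {V : Type*} (G : SimpleGraph V) (f : V → V) : SimpleGraph (V ⊕ V) :=
  SimpleGraph.fromRel (fun x y =>
    match x, y with
    | Sum.inl a, Sum.inl b => G.Adj a b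
    | Sum.inr a, Sum.inr b => G.Adj a b
    | Sum.inl a, Sum.inr b => f a = b
    | Sum.inr _, Sum.inl _ => False)

/-- `S` is a resolving set of `H`: every pair of distinct vertices is resolved by some `w ∈ S`. -/
def IsResolving {V : Type*} (H : SimpleGraph V) (S : Set V) : Prop :=
  ∀ x y : V, x ≠ y → ∃ w ∈ S, H.dist x w ≠ H.dist y w

/-- The metric dimension of `H`: minimum cardinality of a (finite) resolving set. -/
noncomputable def metricDim {V : Type*} (H : SimpleGraph V) : ℕ :=
  sInf {k | ∃ S : Set V, IsResolving H S ∧ S.Finite ∧ S.ncard = k}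

/-- The cycle graph on `ZMod n` (for `n ≥ 3`): `i` is adjacent to `i ± 1`. -/
def cycGraph (n : ℕ) : SimpleGraph (ZMod n) :=
  SimpleGraph.fromRel (fun i j => j = i + 1)

/-- The closed neighborhood `N[S]` of a set `S` in `H`. -/
def closedNbhd {V : Type*} (H : SimpleGraph V) (S : Set V) : Set V :=
  S ∪ {x | ∃ s ∈ S, H.Adj x s}

/-
In `C(G, f)` with `f` constant of value `c`, all vertices of the first copy are joined to the vertex
`c` of the second one. Hence two vertices of the first copy have the distance `min (d, 2)` there,
and no vertex of the second copy separates them, so the part of a resolving set in the first copy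
is an adjacency resolving set of `G`. The second copy contains at least one more vertex, as the
first one sees the two neighbours of `c` alike; and one suffices: a vertex `z` farthest from `c`
separates the copies, and together with `c` it resolves the second copy, the cycle being odd.

In an adjacency resolving set `S` of a cycle each vertex has at most two neighbours, at most one
vertex outside `S` has no neighbour in `S`, and at most `|S|` vertices outside `S` have exactly one.
So double counting the edges leaving `S` gives `2 n ≤ 5 |S| + 2`, and gaps of lengths
`4, 2, 3, 2, 3, …` between consecutive elements of `S` attain the bound.
-/

open scoped Finset

theorem sInf_ncard_eq {α : Type*} [Finite α] {p : Set α → Prop} {k : ℕ}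
    (hex : ∃ S, p S ∧ S.ncard ≤ k) (hle : ∀ S, p S → k ≤ S.ncard) :
    sInf {m | ∃ S : Set α, p S ∧ S.Finite ∧ S.ncard = m} = k := by
  obtain ⟨S, hS, hSk⟩ := hex
  have hmem : S.ncard ∈ {m | ∃ S : Set α, p S ∧ S.Finite ∧ S.ncard = m} :=
    ⟨S, hS, S.toFinite, rfl⟩
  refine le_antisymm ((Nat.sInf_le hmem).trans hSk) (le_csInf ⟨_, hmem⟩ ?_)
  rintro _ ⟨S', hS', -, rfl⟩
  exact hle S' hS'

theorem ncard_preimage_inl_add_ncard_preimage_inr {α β : Type*} [Finite α] [Finite β]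
    (S : Set (α ⊕ β)) : (Sum.inl ⁻¹' S).ncard + (Sum.inr ⁻¹' S).ncard = S.ncard := by
  conv_rhs => rw [← Set.image_preimage_inl_union_image_preimage_inr S]
  rw [Set.ncard_union_eq Set.disjoint_image_inl_image_inr,
    Set.ncard_image_of_injective _ Sum.inl_injective,
    Set.ncard_image_of_injective _ Sum.inr_injective]

theorem natCeil_natCast_div_natCast {K : Type*} [Field K] [LinearOrder K] [IsStrictOrderedRing K]
    [FloorSemiring K] (a : ℕ) {b : ℕ} (hb : 0 < b) : ⌈(a : K) / b⌉₊ = a ⌈/⌉ b := by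
  refine eq_of_forall_ge_iff fun k => ?_
  rw [Nat.ceil_le, div_le_iff₀' (Nat.cast_pos.2 hb), ceilDiv_le_iff_le_mul hb]
  exact_mod_cast Iff.rfl

section Distance

variable {V W : Type*} {G : SimpleGraph V} {H : SimpleGraph W} {u v : V}

theorem le_add_dist_of_lipschitz {φ : V → ℕ} (hφ : ∀ x y, G.Adj x y → φ x ≤ φ y + 1)
    (huv : G.Reachable u v) : φ u ≤ φ v + G.dist u v := by
  obtain ⟨p, hp⟩ := huv.exists_walk_length_eq_dist
  rw [← hp]
  clear hp huv
  induction p with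
  | nil => simp
  | cons h p ih =>
    rw [SimpleGraph.Walk.length_cons]
    linarith [hφ _ _ h]

theorem dist_hom_le (φ : G →g H) (huv : G.Reachable u v) : H.dist (φ u) (φ v) ≤ G.dist u v := by
  obtain ⟨p, hp⟩ := huv.exists_walk_length_eq_dist
  simpa [hp] using SimpleGraph.dist_le (p.map φ)

end Distance

section Functigraph

variable {V : Type*} {G : SimpleGraph V} {f : V → V} {a b c : V}

theorem functigraph_adj_inl_inl :
    (functigraph G f).Adj (Sum.inl a) (Sum.inl b) ↔ G.Adj a b := by
  simpa [functigraph, G.adj_comm b a] using SimpleGraph.Adj.ne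

theorem functigraph_adj_inr_inr :
    (functigraph G f).Adj (Sum.inr a) (Sum.inr b) ↔ G.Adj a b := by
  simpa [functigraph, G.adj_comm b a] using SimpleGraph.Adj.ne

theorem functigraph_adj_inl_inr : (functigraph G f).Adj (Sum.inl a) (Sum.inr b) ↔ f a = b := by
  simp [functigraph]

theorem functigraph_const_dist_inl_inl [DecidableEq V] [DecidableRel G.Adj] :
    (functigraph G fun _ => c).dist (Sum.inl a) (Sum.inl b) =
      if a = b then 0 else if G.Adj a b then 1 else 2 := by
  have toHub (v : V) : (functigraph G fun _ => c).Adj (Sum.inl v) (Sum.inr c) :=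
    functigraph_adj_inl_inr.2 rfl
  let viaHub : (functigraph G fun _ => c).Walk (Sum.inl a) (Sum.inl b) :=
    .cons (toHub a) (.cons (toHub b).symm .nil)
  split_ifs with hab hadj
  · rw [hab, SimpleGraph.dist_self]
  · exact SimpleGraph.dist_eq_one_iff_adj.2 (functigraph_adj_inl_inl.2 hadj)
  · exact le_antisymm (SimpleGraph.dist_le viaHub)
      (viaHub.reachable.one_lt_dist_of_ne_of_not_adj (Sum.inl_injective.ne hab)
        (functigraph_adj_inl_inl.not.2 hadj))

/- The potential is the distance to `Sum.inr b`, so this bounds that distance from below. -/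
theorem functigraph_const_lipschitz (hG : G.Connected) (b : V) (x y : V ⊕ V)
    (hxy : (functigraph G fun _ => c).Adj x y) :
    Sum.elim (fun _ => 1 + G.dist c b) (G.dist · b) x ≤
      Sum.elim (fun _ => 1 + G.dist c b) (G.dist · b) y + 1 := by
  rcases x with x | x <;> rcases y with y | y
  · exact Nat.le_succ _
  · rw [functigraph_adj_inl_inr] at hxy
    simp [hxy, add_comm]
  · rw [SimpleGraph.adj_comm, functigraph_adj_inl_inr] at hxy
    simp only [Sum.elim_inl, Sum.elim_inr, ← hxy]
    omega
  · rw [functigraph_adj_inr_inr, ← SimpleGraph.dist_eq_one_iff_adj] at hxy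
    rw [Sum.elim_inr, Sum.elim_inr, ← hxy, add_comm]
    exact hG.dist_triangle

/-- The inclusion of the second copy of `G` into the functigraph. -/
def functigraphInr (G : SimpleGraph V) (f : V → V) : G →g functigraph G f :=
  ⟨Sum.inr, functigraph_adj_inr_inr.2⟩

theorem functigraph_const_dist_inr_inr (hG : G.Connected) :
    (functigraph G fun _ => c).dist (Sum.inr a) (Sum.inr b) = G.dist a b := by
  have hreach : G.Reachable a b := hG.preconnected a b
  refine le_antisymm (dist_hom_le (functigraphInr G fun _ => c) hreach) ?_
  simpa [functigraphInr] using le_add_dist_of_lipschitz (functigraph_const_lipschitz hG b)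
    (hreach.map (functigraphInr G fun _ => c))

theorem functigraph_const_dist_inl_inr (hG : G.Connected) :
    (functigraph G fun _ => c).dist (Sum.inl a) (Sum.inr b) = 1 + G.dist c b := by
  have toHub : (functigraph G fun _ => c).Adj (Sum.inl a) (Sum.inr c) :=
    functigraph_adj_inl_inr.2 rfl
  have hreach : (functigraph G fun _ => c).Reachable (Sum.inl a) (Sum.inr b) :=
    toHub.reachable.trans ((hG.preconnected c b).map (functigraphInr G fun _ => c))
  refine le_antisymm ?_ ?_
  · calc (functigraph G fun _ => c).dist (Sum.inl a) (Sum.inr b)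
      _ ≤ (functigraph G fun _ => c).dist (Sum.inl a) (Sum.inr c) +
          (functigraph G fun _ => c).dist (Sum.inr c) (Sum.inr b) :=
        toHub.reachable.dist_triangle_left _
      _ = 1 + G.dist c b := by
        rw [SimpleGraph.dist_eq_one_iff_adj.2 toHub, functigraph_const_dist_inr_inr hG]
  · simpa using le_add_dist_of_lipschitz (functigraph_const_lipschitz hG b) hreach

theorem functigraph_const_dist_inr_inl (hG : G.Connected) :
    (functigraph G fun _ => c).dist (Sum.inr a) (Sum.inl b) = 1 + G.dist a c := by
  rw [SimpleGraph.dist_comm, functigraph_const_dist_inl_inr hG, SimpleGraph.dist_comm]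

end Functigraph

section AdjacencyDimension

variable {V : Type*} {G : SimpleGraph V} {S T : Set V} {c z : V}

/-- `S` is an adjacency resolving set of `G`: distinct vertices outside `S` have distinct
neighbourhoods in `S`. Equivalently, `S` resolves the vertices of `G` for the truncated distance
`min (G.dist u v) 2`. -/
def IsAdjResolving (G : SimpleGraph V) (S : Set V) : Prop :=
  ∀ ⦃a b⦄, a ∉ S → b ∉ S → (∀ s ∈ S, G.Adj a s ↔ G.Adj b s) → a = b

/-- The adjacency dimension of `G`: the minimum cardinality of a finite adjacency resolving set. -/
noncomputable def adjDim (G : SimpleGraph V) : ℕ :=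
  sInf {k | ∃ S, IsAdjResolving G S ∧ S.Finite ∧ S.ncard = k}

theorem adjDim_le_ncard [Finite V] (hS : IsAdjResolving G S) : adjDim G ≤ S.ncard :=
  Nat.sInf_le ⟨S, hS, S.toFinite, rfl⟩

theorem exists_isAdjResolving_ncard_eq_adjDim [Finite V] (G : SimpleGraph V) :
    ∃ S, IsAdjResolving G S ∧ S.ncard = adjDim G := by
  have hne : {k | ∃ S, IsAdjResolving G S ∧ S.Finite ∧ S.ncard = k}.Nonempty :=
    ⟨_, Set.univ, fun a _ ha => absurd (Set.mem_univ a) ha, Set.toFinite _, rfl⟩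
  obtain ⟨S, hS, -, hcard⟩ := Nat.sInf_mem hne
  exact ⟨S, hS, hcard⟩

theorem IsAdjResolving.nonempty [Nontrivial V] (hS : IsAdjResolving G S) : S.Nonempty := by
  by_contra! hempty
  subst hempty
  obtain ⟨a, b, hab⟩ := exists_pair_ne V
  exact hab (hS (Set.notMem_empty a) (Set.notMem_empty b) (by simp))

theorem IsAdjResolving.exists_dist_inl_inl_ne (hS : IsAdjResolving G S) {a b : V} (hab : a ≠ b) :
    ∃ s ∈ S, (functigraph G fun _ => c).dist (Sum.inl a) (Sum.inl s) ≠
      (functigraph G fun _ => c).dist (Sum.inl b) (Sum.inl s) := by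
  classical
  by_contra! h
  simp only [functigraph_const_dist_inl_inl] at h
  have ha : a ∉ S := fun ha => by have := h a ha; grind
  have hb : b ∉ S := fun hb => by have := h b hb; grind
  exact hab (hS ha hb fun s hs => by have := h s hs; grind)

theorem IsResolving.isAdjResolving_preimage_inl (hG : G.Connected) {S : Set (V ⊕ V)}
    (hS : IsResolving (functigraph G fun _ => c) S) : IsAdjResolving G (Sum.inl ⁻¹' S) := by
  classical
  intro a b ha hb hadj
  by_contra hab
  obtain ⟨w | w, hw, hne⟩ := hS (Sum.inl a) (Sum.inl b) (Sum.inl_injective.ne hab)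
  · have hwa : a ≠ w := fun h => ha (h ▸ hw)
    have hwb : b ≠ w := fun h => hb (h ▸ hw)
    exact hne (by simp only [functigraph_const_dist_inl_inl, hwa, hwb, hadj w hw])
  · exact hne (by simp only [functigraph_const_dist_inl_inr hG])

theorem IsResolving.preimage_inr_nonempty (hG : G.Connected) {S : Set (V ⊕ V)}
    (hS : IsResolving (functigraph G fun _ => c) S) {x y : V} (hxy : x ≠ y)
    (hdist : G.dist x c = G.dist y c) : (Sum.inr ⁻¹' S).Nonempty := by
  obtain ⟨w | w, hw, hne⟩ := hS (Sum.inr x) (Sum.inr y) (Sum.inr_injective.ne hxy)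
  · simp [functigraph_const_dist_inr_inl hG, hdist] at hne
  · exact ⟨w, hw⟩

/- The vertex `z` sees all of the first copy at distance `1 + d(c, z)`, which is larger than its
distance to any vertex of the second copy; the first copy sees `x` in the second one at distance
`1 + d(x, c)`, so that it plays the role of `c` there. -/
theorem IsAdjResolving.isResolving_functigraph_const (hG : G.Connected) (hT : IsAdjResolving G T)
    (hne : T.Nonempty) (hfar : ∀ b, G.dist b z ≤ G.dist c z) (hcz : IsResolving G {c, z}) :
    IsResolving (functigraph G fun _ => c) (insert (Sum.inr z) (Sum.inl '' T)) := by
  rintro (x | x) (y | y) hxy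
  · obtain ⟨s, hs, hsep⟩ := hT.exists_dist_inl_inl_ne (c := c) fun h => hxy (congrArg _ h)
    exact ⟨Sum.inl s, by simp [hs], hsep⟩
  · refine ⟨Sum.inr z, Set.mem_insert _ _, ?_⟩
    rw [functigraph_const_dist_inl_inr hG, functigraph_const_dist_inr_inr hG]
    have := hfar y
    omega
  · refine ⟨Sum.inr z, Set.mem_insert _ _, ?_⟩
    rw [functigraph_const_dist_inl_inr hG, functigraph_const_dist_inr_inr hG]
    have := hfar x
    omega
  · obtain ⟨w, rfl | rfl, hsep⟩ := hcz x y fun h => hxy (congrArg _ h)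
    · obtain ⟨t, ht⟩ := hne
      refine ⟨Sum.inl t, by simp [ht], ?_⟩
      rwa [functigraph_const_dist_inr_inl hG, functigraph_const_dist_inr_inl hG, ne_eq,
        add_right_inj]
    · refine ⟨Sum.inr w, Set.mem_insert _ _, ?_⟩
      rwa [functigraph_const_dist_inr_inr hG, functigraph_const_dist_inr_inr hG]

theorem metricDim_functigraph_const [Finite V] (hG : G.Connected) {x y : V} (hxy : x ≠ y)
    (hdist : G.dist x c = G.dist y c) (hfar : ∀ b, G.dist b z ≤ G.dist c z)
    (hcz : IsResolving G {c, z}) : metricDim (functigraph G fun _ => c) = adjDim G + 1 := by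
  have : Nontrivial V := ⟨x, y, hxy⟩
  refine sInf_ncard_eq ?_ fun S hS => ?_
  · obtain ⟨T, hT, hcard⟩ := exists_isAdjResolving_ncard_eq_adjDim G
    refine ⟨_, hT.isResolving_functigraph_const hG hT.nonempty hfar hcz, ?_⟩
    rw [← hcard, ← Set.ncard_image_of_injective T Sum.inl_injective]
    exact Set.ncard_insert_le _ _
  · rw [← ncard_preimage_inl_add_ncard_preimage_inr S]
    exact Nat.add_le_add (adjDim_le_ncard (hS.isAdjResolving_preimage_inl hG))
      ((Set.ncard_pos).2 (hS.preimage_inr_nonempty hG hxy hdist))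

end AdjacencyDimension

section DoubleCounting

variable {ι V : Type*}

theorem card_filter_card_eq_le_choose {s : Finset ι} {F : ι → Finset V} {T : Finset V}
    (hF : Set.InjOn F s) (hT : ∀ i ∈ s, F i ⊆ T) (k : ℕ) :
    #{i ∈ s | #(F i) = k} ≤ (#T).choose k := by
  rw [← Finset.card_powersetCard]
  refine Finset.card_le_card_of_injOn F (fun i hi => ?_) (hF.mono (Finset.filter_subset _ _))
  obtain ⟨his, hik⟩ := Finset.mem_filter.1 hi
  exact Finset.mem_powersetCard.2 ⟨hT i his, hik⟩

theorem two_mul_card_le_sum_card_add {s : Finset ι} {F : ι → Finset V} {T : Finset V}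
    (hF : Set.InjOn F s) (hT : ∀ i ∈ s, F i ⊆ T) :
    2 * #s ≤ ∑ i ∈ s, #(F i) + #T + 2 := by
  have hempty : #{i ∈ s | #(F i) = 0} ≤ 1 := by
    simpa using card_filter_card_eq_le_choose hF hT 0
  have hsingle : #{i ∈ s | #(F i) = 1} ≤ #T := by
    simpa using card_filter_card_eq_le_choose hF hT 1
  calc 2 * #s = ∑ i ∈ s, 2 := by rw [Finset.sum_const, smul_eq_mul, mul_comm]
    _ ≤ ∑ i ∈ s, (#(F i) + (if #(F i) = 1 then 1 else 0) + 2 * if #(F i) = 0 then 1 else 0) :=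
      Finset.sum_le_sum fun i _ => by split_ifs <;> omega
    _ = ∑ i ∈ s, #(F i) + #{i ∈ s | #(F i) = 1} + 2 * #{i ∈ s | #(F i) = 0} := by
      simp only [Finset.sum_add_distrib, ← Finset.mul_sum, Finset.card_filter]
    _ ≤ ∑ i ∈ s, #(F i) + #T + 2 := by omega

variable [Fintype V] {G : SimpleGraph V} [DecidableRel G.Adj]

theorem IsAdjResolving.two_mul_card_le {d : ℕ} (hd : ∀ v, G.degree v ≤ d) {T : Finset V}
    (hT : IsAdjResolving G T) : 2 * Fintype.card V ≤ (d + 3) * #T + 2 := by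
  classical
  have hinj : Set.InjOn (fun v => T.bipartiteAbove G.Adj v) (Tᶜ : Finset V) := fun a ha b hb hab =>
    hT (by simpa using ha) (by simpa using hb) fun s hs => by
      simpa [show s ∈ T from hs, Finset.mem_bipartiteAbove] using Finset.ext_iff.1 hab s
  have hedges : ∑ v ∈ Tᶜ, #(T.bipartiteAbove G.Adj v) ≤ #T * d := by
    rw [Finset.sum_card_bipartiteAbove_eq_sum_card_bipartiteBelow]
    refine Finset.sum_le_card_nsmul _ _ _ fun s _ => (Finset.card_le_card ?_).trans (hd s)
    intro v hv
    simpa [G.adj_comm s v] using (Finset.mem_bipartiteBelow _).1 hv |>.2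
  have hcodes := two_mul_card_le_sum_card_add hinj fun v _ => Finset.filter_subset _ _
  have hcompl : #T + #Tᶜ = Fintype.card V := Finset.card_add_card_compl T
  linarith

end DoubleCounting

section Cycle

variable {n : ℕ}

theorem cycGraph_adj_iff [Fact (1 < n)] {a b : ZMod n} :
    (cycGraph n).Adj a b ↔ b = a + 1 ∨ b = a - 1 := by
  rw [cycGraph, SimpleGraph.fromRel_adj, eq_sub_iff_add_eq, eq_comm (a := b + 1)]
  grind [one_ne_zero (α := ZMod n)]

theorem cycGraph_edist_add_natCast_le (a : ZMod n) (k : ℕ) :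
    (cycGraph n).edist a (a + k) ≤ k := by
  induction k with
  | zero => simp
  | succ k ih =>
    have hstep : (cycGraph n).edist (a + k) (a + k + 1) ≤ 1 := by
      rw [SimpleGraph.edist_le_one_iff_adj_or_eq, cycGraph, SimpleGraph.fromRel_adj]
      tauto
    rw [Nat.cast_succ, Nat.cast_succ, ← add_assoc]
    exact SimpleGraph.edist_triangle.trans (add_le_add ih hstep)

theorem cycGraph_edist_add_intCast_le (a : ZMod n) (k : ℤ) :
    (cycGraph n).edist a (a + k) ≤ k.natAbs := by
  obtain ⟨m, rfl | rfl⟩ := k.eq_nat_or_neg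
  · simpa using cycGraph_edist_add_natCast_le a m
  · rw [SimpleGraph.edist_comm]
    simpa [← sub_eq_add_neg] using cycGraph_edist_add_natCast_le (a - (m : ZMod n)) m

theorem cycGraph_edist_le (a b : ZMod n) :
    (cycGraph n).edist a b ≤ (a - b).valMinAbs.natAbs := by
  simpa [SimpleGraph.edist_comm] using cycGraph_edist_add_intCast_le b (a - b).valMinAbs

theorem cycGraph_connected (n : ℕ) : (cycGraph n).Connected :=
  ⟨fun a b => SimpleGraph.edist_ne_top_iff_reachable.1
    ((cycGraph_edist_le a b).trans_lt (ENat.natCast_lt_top _)).ne⟩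

theorem natAbs_valMinAbs_add_one_le (a : ZMod n) :
    (a + 1).valMinAbs.natAbs ≤ a.valMinAbs.natAbs + 1 := by
  have hone : (1 : ZMod n).valMinAbs.natAbs ≤ 1 := by
    rcases eq_zero_or_neZero n with rfl | _
    · exact le_rfl
    · simpa using ZMod.natAbs_min_of_le_div_two n (1 : ZMod n).valMinAbs 1 (by simp)
        (ZMod.natAbs_valMinAbs_le _)
  calc (a + 1).valMinAbs.natAbs ≤ (a.valMinAbs + (1 : ZMod n).valMinAbs).natAbs :=
        ZMod.natAbs_valMinAbs_add_le a 1
    _ ≤ a.valMinAbs.natAbs + (1 : ZMod n).valMinAbs.natAbs := Int.natAbs_add_le _ _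
    _ ≤ a.valMinAbs.natAbs + 1 := Nat.add_le_add_left hone _

theorem cycGraph_dist (a b : ZMod n) : (cycGraph n).dist a b = (a - b).valMinAbs.natAbs := by
  have hreach : (cycGraph n).Reachable a b := (cycGraph_connected n).preconnected a b
  have hlip (x y : ZMod n) (hxy : (cycGraph n).Adj x y) :
      (x - b).valMinAbs.natAbs ≤ (y - b).valMinAbs.natAbs + 1 := by
    rcases ((SimpleGraph.fromRel_adj _ _ _).1 hxy).2 with rfl | rfl
    · rw [← ZMod.natAbs_valMinAbs_neg (x - b), ← ZMod.natAbs_valMinAbs_neg (x + 1 - b)]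
      convert natAbs_valMinAbs_add_one_le (-(x + 1 - b)) using 3
      ring
    · rw [add_sub_right_comm]
      exact natAbs_valMinAbs_add_one_le (y - b)
  refine le_antisymm ?_ ?_
  · exact_mod_cast hreach.coe_dist_eq_edist.trans_le (cycGraph_edist_le a b)
  · simpa using le_add_dist_of_lipschitz hlip hreach

theorem cycGraph_dist_eq_dist_iff {a b c : ZMod n} :
    (cycGraph n).dist a c = (cycGraph n).dist b c ↔ a = b ∨ a + b = c + c := by
  rw [cycGraph_dist, cycGraph_dist, ZMod.natAbs_valMinAbs_eq_natAbs_valMinAbs, sub_left_inj,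
    neg_sub, sub_eq_sub_iff_add_eq_add]

theorem cycGraph_isResolving_pair (hodd : Odd n) {c z : ZMod n} (hcz : c ≠ z) :
    IsResolving (cycGraph n) {c, z} := by
  intro a b hab
  by_contra! h
  have hc : a + b = c + c := (cycGraph_dist_eq_dist_iff.1 (h c (by simp))).resolve_left hab
  have hz : a + b = z + z := (cycGraph_dist_eq_dist_iff.1 (h z (by simp))).resolve_left hab
  have hdouble : (c - z) + (c - z) = 0 := by linear_combination hz - hc
  exact hcz (sub_eq_zero.1 ((ZMod.add_self_eq_zero_iff_eq_zero hodd).1 hdouble))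

theorem cycGraph_dist_le_dist_add_half [NeZero n] (c b : ZMod n) :
    (cycGraph n).dist b (c + (n / 2 : ℕ)) ≤ (cycGraph n).dist c (c + (n / 2 : ℕ)) := by
  have hhalf : (cycGraph n).dist c (c + (n / 2 : ℕ)) = n / 2 := by
    rw [cycGraph_dist, sub_add_cancel_left, ZMod.natAbs_valMinAbs_neg,
      ZMod.valMinAbs_natCast_of_le_half le_rfl, Int.natAbs_natCast]
  rw [hhalf, cycGraph_dist]
  exact ZMod.natAbs_valMinAbs_le _

theorem natCast_ne_zero_of_pos_of_lt {k : ℕ} (hk : 0 < k) (hkn : k < n) : (k : ZMod n) ≠ 0 := by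
  rw [Ne, ZMod.natCast_eq_zero_iff]
  exact Nat.not_dvd_of_pos_of_lt hk hkn

theorem two_mul_le_of_isAdjResolving_cycGraph (hn : 1 < n) {S : Set (ZMod n)}
    (hS : IsAdjResolving (cycGraph n) S) : 2 * n ≤ 5 * S.ncard + 2 := by
  classical
  have : Fact (1 < n) := ⟨hn⟩
  have : NeZero n := ⟨by omega⟩
  have hdegree (v : ZMod n) : (cycGraph n).degree v ≤ 2 := by
    rw [← SimpleGraph.card_neighborFinset_eq_degree]
    refine (Finset.card_le_card fun w hw => ?_).trans (Finset.card_le_two (a := v + 1) (b := v - 1))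
    simpa [cycGraph_adj_iff] using hw
  rw [← S.coe_toFinset] at hS
  simpa [Set.ncard_eq_toFinset_card'] using hS.two_mul_card_le hdegree

theorem eq_of_cycGraph_adj_iff_of_add_one_mem (hn : 4 < n) {S : Set (ZMod n)}
    (hshort : ∀ s ∈ S, s - 2 ∈ S ∨ s - 1 ∈ S ∨ s + 1 ∈ S ∨ s + 2 ∈ S) {a b : ZMod n}
    (ha : a ∉ S) (hb : b ∉ S) (hadj : ∀ s ∈ S, (cycGraph n).Adj a s ↔ (cycGraph n).Adj b s)
    (haS : a + 1 ∈ S) : a = b := by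
  have : Fact (1 < n) := ⟨by omega⟩
  have htwo : (2 : ZMod n) ≠ 0 := mod_cast natCast_ne_zero_of_pos_of_lt (k := 2) two_pos (by omega)
  have hfour : (4 : ZMod n) ≠ 0 := mod_cast natCast_ne_zero_of_pos_of_lt (k := 4) four_pos hn
  simp only [cycGraph_adj_iff] at hadj
  rcases (hadj _ haS).1 (Or.inl rfl) with h | h
  · exact add_right_cancel h
  · obtain rfl : b = a + 2 := by linear_combination -h
    rcases hshort _ haS with hs | hs | hs | hs
    · rcases (hadj _ hs).1 (Or.inr (by ring)) with h | h
      · exact absurd (by linear_combination -h) hfour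
      · exact absurd (by linear_combination -h) htwo
    · exact absurd (by simpa using hs) ha
    · exact absurd (by simpa [add_assoc, one_add_one_eq_two] using hs) hb
    · rcases (hadj _ hs).2 (Or.inl (by ring)) with h | h
      · exact absurd (by linear_combination h) htwo
      · exact absurd (by linear_combination h) hfour

/- The arcs cut out by `S` are short: `hshort` says that no two consecutive arcs both have at least
two interior vertices, and `hfree` that at most one vertex has no neighbour in `S`. -/
theorem isAdjResolving_cycGraph_of_short_arcs (hn : 4 < n) {S : Set (ZMod n)}
    (hshort : ∀ s ∈ S, s - 2 ∈ S ∨ s - 1 ∈ S ∨ s + 1 ∈ S ∨ s + 2 ∈ S)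
    (hfree : {v | v - 1 ∉ S ∧ v ∉ S ∧ v + 1 ∉ S}.Subsingleton) :
    IsAdjResolving (cycGraph n) S := by
  have : Fact (1 < n) := ⟨by omega⟩
  intro a b ha hb hadj
  by_cases haSucc : a + 1 ∈ S
  · exact eq_of_cycGraph_adj_iff_of_add_one_mem hn hshort ha hb hadj haSucc
  by_cases hbSucc : b + 1 ∈ S
  · exact (eq_of_cycGraph_adj_iff_of_add_one_mem hn hshort hb ha (fun s hs => (hadj s hs).symm)
      hbSucc).symm
  simp only [cycGraph_adj_iff] at hadj
  have hPred (haPred : a - 1 ∈ S) : a = b := by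
    rcases (hadj _ haPred).1 (Or.inr rfl) with h | h
    · exact absurd (h ▸ haPred) hbSucc
    · exact sub_left_injective h
  by_contra hab
  refine hab (hfree ⟨fun haPred => hab (hPred haPred), ha, haSucc⟩ ⟨fun hbPred => ?_, hb, hbSucc⟩)
  rcases (hadj _ hbPred).2 (Or.inr rfl) with h | h
  · exact haSucc (h ▸ hbPred)
  · exact hab (sub_left_injective h.symm)

/-- Representatives in `[0, n)` of a minimum adjacency resolving set of the cycle of order `n`:
the vertices `0, 4, 6, 9, 11, 14, 16, …`, together with `n - 1` if `n` is `4` modulo `5`. -/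
def cycleAdjResolvingFinset (n : ℕ) : Finset ℕ :=
  {k ∈ Finset.range n | k = 0 ∨ k % 5 = 4 ∨ (k % 5 = 1 ∧ k ≠ 1) ∨ (k + 1 = n ∧ n % 5 = 4)}

theorem mem_cycleAdjResolvingFinset {k : ℕ} : k ∈ cycleAdjResolvingFinset n ↔
    k < n ∧ (k = 0 ∨ k % 5 = 4 ∨ (k % 5 = 1 ∧ k ≠ 1) ∨ (k + 1 = n ∧ n % 5 = 4)) := by
  rw [cycleAdjResolvingFinset, Finset.mem_filter, Finset.mem_range]

theorem card_cycleAdjResolvingFinset_le (hn : n ≠ 1) :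
    #(cycleAdjResolvingFinset n) ≤ (2 * n + 2) / 5 := by
  refine (Finset.card_le_card_of_injOn (fun k => 2 * k / 5) (fun k hk => ?_)
    (fun k hk l hl hkl => ?_)).trans (Finset.card_range _).le
  · rw [SetLike.mem_coe, mem_cycleAdjResolvingFinset] at hk
    rw [SetLike.mem_coe, Finset.mem_range]
    dsimp only
    omega
  · rw [SetLike.mem_coe, mem_cycleAdjResolvingFinset] at hk hl
    simp only at hkl
    omega

theorem exists_mem_cycleAdjResolvingFinset_natCast_eq (hn : 4 < n) {k : ℕ}
    (hk : k ∈ cycleAdjResolvingFinset n) : ∃ l ∈ cycleAdjResolvingFinset n,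
      (l : ZMod n) = k - 2 ∨ (l : ZMod n) = k - 1 ∨ (l : ZMod n) = k + 1 ∨
        (l : ZMod n) = k + 2 := by
  obtain ⟨l, hl, hlk⟩ : ∃ l ∈ cycleAdjResolvingFinset n,
      l + 2 = k ∨ l + 2 = k + n ∨ l + 1 = k + n ∨ l + n = k + 1 ∨ l + n = k + 2 ∨ l = k + 2 := by
    simp only [mem_cycleAdjResolvingFinset] at hk ⊢
    obtain ⟨hkn, rfl | hk | hk | hk⟩ := hk
    · by_cases hmod : n % 5 = 1 ∨ n % 5 = 3
      · exact ⟨n - 2, by omega⟩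
      · exact ⟨n - 1, by omega⟩
    · by_cases hlast : k + 2 < n
      · exact ⟨k + 2, by omega⟩
      · exact ⟨0, by omega⟩
    · exact ⟨k - 2, by omega⟩
    · exact ⟨0, by omega⟩
  refine ⟨l, hl, ?_⟩
  have hn0 : (n : ZMod n) = 0 := ZMod.natCast_self n
  rcases hlk with h | h | h | h | h | h <;>
    replace h := congrArg (Nat.cast : ℕ → ZMod n) h <;> push_cast [hn0] at h <;> grind

theorem exists_mem_cycleAdjResolvingFinset_of_ne_two (hn : 4 < n) {v : ZMod n} (hv : v ≠ 2) :
    ∃ l ∈ cycleAdjResolvingFinset n,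
      (l : ZMod n) = v - 1 ∨ (l : ZMod n) = v ∨ (l : ZMod n) = v + 1 := by
  have : NeZero n := ⟨by omega⟩
  obtain ⟨k, hkn, rfl⟩ : ∃ k < n, (k : ZMod n) = v := ⟨v.val, v.val_lt, v.natCast_zmod_val⟩
  have hk2 : k ≠ 2 := fun h => hv (by simp [h])
  obtain ⟨l, hl, hlk⟩ : ∃ l ∈ cycleAdjResolvingFinset n,
      l + 1 = k ∨ l = k ∨ l = k + 1 ∨ l + n = k + 1 := by
    simp only [mem_cycleAdjResolvingFinset]
    by_cases hself : k = 0 ∨ k % 5 = 4 ∨ (k % 5 = 1 ∧ k ≠ 1)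
    · exact ⟨k, by omega⟩
    by_cases hpred : k % 5 = 3
    · by_cases hlast : k + 1 < n
      · exact ⟨k + 1, by omega⟩
      · exact ⟨0, by omega⟩
    · exact ⟨k - 1, by omega⟩
  refine ⟨l, hl, ?_⟩
  have hn0 : (n : ZMod n) = 0 := ZMod.natCast_self n
  rcases hlk with h | h | h | h <;>
    replace h := congrArg (Nat.cast : ℕ → ZMod n) h <;> push_cast [hn0] at h <;> grind

theorem isAdjResolving_natCast_image_cycleAdjResolvingFinset (hn : 4 < n) :
    IsAdjResolving (cycGraph n) ((Nat.cast : ℕ → ZMod n) '' cycleAdjResolvingFinset n) := by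
  refine isAdjResolving_cycGraph_of_short_arcs hn ?_ ?_
  · rintro _ ⟨k, hk, rfl⟩
    obtain ⟨l, hl, h⟩ := exists_mem_cycleAdjResolvingFinset_natCast_eq hn hk
    have hlS := Set.mem_image_of_mem (Nat.cast : ℕ → ZMod n) hl
    rcases h with h | h | h | h <;> simp only [← h, hlS, true_or, or_true]
  · refine Set.subsingleton_of_forall_eq 2 fun v hv => ?_
    by_contra hv2
    obtain ⟨l, hl, h⟩ := exists_mem_cycleAdjResolvingFinset_of_ne_two hn hv2
    have hlS := Set.mem_image_of_mem (Nat.cast : ℕ → ZMod n) hl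
    rcases h with h | h | h
    · exact hv.1 (h ▸ hlS)
    · exact hv.2.1 (h ▸ hlS)
    · exact hv.2.2 (h ▸ hlS)

theorem adjDim_cycGraph (hn : 4 < n) : adjDim (cycGraph n) = (2 * n + 2) / 5 := by
  have : NeZero n := ⟨by omega⟩
  refine sInf_ncard_eq ⟨_, isAdjResolving_natCast_image_cycleAdjResolvingFinset hn, ?_⟩
    fun S hS => ?_
  · refine (Set.ncard_image_le (Finset.finite_toSet _)).trans ?_
    rw [Set.ncard_coe_finset]
    exact card_cycleAdjResolvingFinset_le (by omega)
  · have := two_mul_le_of_isAdjResolving_cycGraph (by omega) hS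
    omega

end Cycle

theorem stmt14 (n : ℕ) (hodd : Odd n) (hn : 5 <= n) (f₀ : ZMod n -> ZMod n)
    (c : ZMod n) (hf : ∀ u, f₀ u = c) :
    metricDim (functigraph (cycGraph n) f₀) = ⌈(2 * (n : ℚ) + 3) / 5⌉₊ := by
  obtain rfl : f₀ = fun _ => c := funext hf
  have : NeZero n := ⟨by omega⟩
  have htwo : (2 : ZMod n) ≠ 0 := mod_cast natCast_ne_zero_of_pos_of_lt (k := 2) two_pos (by omega)
  have hneighbours : c + 1 ≠ c - 1 := fun h => htwo (by linear_combination h)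
  have hequidistant : (cycGraph n).dist (c + 1) c = (cycGraph n).dist (c - 1) c :=
    cycGraph_dist_eq_dist_iff.2 (Or.inr (by ring))
  have hantipode : c ≠ c + (n / 2 : ℕ) := by
    simpa using natCast_ne_zero_of_pos_of_lt (n := n) (k := n / 2) (by omega) (by omega)
  calc metricDim (functigraph (cycGraph n) fun _ => c)
    _ = adjDim (cycGraph n) + 1 :=
      metricDim_functigraph_const (cycGraph_connected n) hneighbours hequidistant
        (cycGraph_dist_le_dist_add_half c) (cycGraph_isResolving_pair hodd hantipode)
    _ = (2 * n + 2) / 5 + 1 := by rw [adjDim_cycGraph hn]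
    _ = (2 * n + 3) ⌈/⌉ 5 := by rw [Nat.ceilDiv_eq_add_pred_div]; omega
    _ = ⌈(2 * (n : ℚ) + 3) / 5⌉₊ := by
      exact_mod_cast (natCeil_natCast_div_natCast (K := ℚ) (2 * n + 3) (b := 5) (by simp)).symm
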